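/- Let p ∈ [1,∞] and θ_p = 2 arcsin(2√(p−1)/p) (with θ_1 = θ_∞ = 0). Then for every n,d ∈ ℕ with 1 ≤ d ≤ n and every function f : {-1,1}^n → ℂ of degree at most d, ‖Δf‖_{L_p} ≤ 10 · d^{2 − θ_p/π} · ‖f‖_{L_p}. -/

import Mathlib

open scoped BigOperators ENNReal NNReal

noncomputable section

namespace HammingCube

variable {X : Type*} [NormedAddCommGroup X] [NormedSpace ℂ X]

/-- The sign ±1 associated to a boolean coordinate. -/
def sgn (b : Bool) : ℝ := if b then 1 else -1

/-- The Walsh function `w_A(ε) = ∏_{i ∈ A} ε_i`. -/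
def walsh {n : ℕ} (A : Finset (Fin n)) (ε : Fin n → Bool) : ℝ := ∏ i ∈ A, sgn (ε i)

/-- The Fourier–Walsh coefficient `f̂(A) = 2⁻ⁿ ∑_δ f(δ) w_A(δ)`. -/
def coeff {n : ℕ} (f : (Fin n → Bool) → X) (A : Finset (Fin n)) : X :=
  (2 ^ n : ℝ)⁻¹ • ∑ δ : Fin n → Bool, walsh A δ • f δ

/-- `f` has degree at most `d`: `f̂(A) = 0` whenever `|A| > d`. -/
def degLE {n : ℕ} (f : (Fin n → Bool) → X) (d : ℕ) : Prop :=
  ∀ A : Finset (Fin n), d < A.card → coeff f A = 0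

/-- `f` belongs to the `d`-th tail space: `f̂(A) = 0` whenever `|A| < d`. -/
def tailSpace {n : ℕ} (f : (Fin n → Bool) → X) (d : ℕ) : Prop :=
  ∀ A : Finset (Fin n), A.card < d → coeff f A = 0

/-- The heat semigroup `e^{-tΔ} f = ∑_A e^{-t|A|} f̂(A) w_A`. -/
def heat {n : ℕ} (t : ℝ) (f : (Fin n → Bool) → X) : (Fin n → Bool) → X :=
  fun ε => ∑ A : Finset (Fin n), Real.exp (-t * A.card) • walsh A ε • coeff f A

/-- The hypercube Laplacian `Δ f = ∑_A |A| f̂(A) w_A`. -/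
def lap {n : ℕ} (f : (Fin n → Bool) → X) : (Fin n → Bool) → X :=
  fun ε => ∑ A : Finset (Fin n), (A.card : ℝ) • walsh A ε • coeff f A

/-- The fractional Laplacian `Δ^γ f = ∑_A |A|^γ f̂(A) w_A`. -/
def fracLap {n : ℕ} (γ : ℝ) (f : (Fin n → Bool) → X) : (Fin n → Bool) → X :=
  fun ε => ∑ A : Finset (Fin n), ((A.card : ℝ) ^ γ) • walsh A ε • coeff f A

/-- The `i`-th discrete partial derivative. -/
def pderiv {n : ℕ} (i : Fin n) (f : (Fin n → Bool) → X) : (Fin n → Bool) → X :=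
  fun ε => (2 : ℝ)⁻¹ • (f ε - f (Function.update ε i (!(ε i))))

/-- The vector-valued `L_p` norm `(2⁻ⁿ ∑_ε ‖f(ε)‖^p)^{1/p}` for finite `p`. -/
def lpNorm {n : ℕ} {Y : Type*} [NormedAddCommGroup Y] (p : ℝ)
    (f : (Fin n → Bool) → Y) : ℝ :=
  ((2 ^ n : ℝ)⁻¹ * ∑ ε : Fin n → Bool, ‖f ε‖ ^ p) ^ (1 / p)

/-- The `L_∞` norm `max_ε ‖f(ε)‖`. -/
def linfNorm {n : ℕ} {Y : Type*} [NormedAddCommGroup Y]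
    (f : (Fin n → Bool) → Y) : ℝ :=
  ⨆ ε : Fin n → Bool, ‖f ε‖

/-- The `L_p` norm for `p ∈ [1,∞]` encoded as `p : ℝ≥0∞`. -/
def lpNormE {n : ℕ} {Y : Type*} [NormedAddCommGroup Y] (p : ℝ≥0∞)
    (f : (Fin n → Bool) → Y) : ℝ :=
  if p = ⊤ then linfNorm f else lpNorm p.toReal f

/-- The scalar `L_p` norm of the gradient `‖(∑_i |∂_i f|²)^{1/2}‖_{L_p}`. -/
def gradLpNorm {n : ℕ} (p : ℝ) (f : (Fin n → Bool) → ℂ) : ℝ :=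
  lpNorm p (fun ε => Real.sqrt (∑ i : Fin n, ‖pderiv i f ε‖ ^ 2))

/-- The Rademacher projection `Rad f(ε) = ∑_i f̂({i}) ε_i`. -/
def Rad {n : ℕ} (f : (Fin n → Bool) → X) : (Fin n → Bool) → X :=
  fun ε => ∑ i : Fin n, sgn (ε i) • coeff f {i}

/-- A complex Banach space is `K`-convex if the Rademacher projections are uniformly
bounded on `L_q` for some `q ∈ (1,∞)`. -/
def KConvex (X : Type*) [NormedAddCommGroup X] [NormedSpace ℂ X] : Prop :=
  ∃ q : ℝ, 1 < q ∧ ∃ M : ℝ, ∀ (n : ℕ) (f : (Fin n → Bool) → X),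
    lpNorm q (Rad f) ≤ M * lpNorm q f

/-- `X` has cotype `q` with constant `C`. -/
def HasCotype (X : Type*) [NormedAddCommGroup X] [NormedSpace ℂ X] (q C : ℝ) : Prop :=
  ∀ (n : ℕ) (x : Fin n → X),
    C⁻¹ * (∑ i : Fin n, ‖x i‖ ^ q) ^ (1 / q) ≤
      ((2 ^ n : ℝ)⁻¹ * ∑ ε : Fin n → Bool, ‖∑ i : Fin n, sgn (ε i) • x i‖ ^ q) ^ (1 / q)

/-- The entropy `Ent(h)` of a nonnegative function on the cube. -/
def entropy {n : ℕ} (h : (Fin n → Bool) → ℝ) : ℝ :=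
  (2 ^ n : ℝ)⁻¹ * ∑ ε : Fin n → Bool, h ε * Real.log (h ε) -
    ((2 ^ n : ℝ)⁻¹ * ∑ ε : Fin n → Bool, h ε) *
      Real.log ((2 ^ n : ℝ)⁻¹ * ∑ ε : Fin n → Bool, h ε)

/-- The `L_∞` norm of the gradient `max_ε (∑_i |∂_i f(ε)|²)^{1/2}`. -/
def gradLinfNorm {n : ℕ} (f : (Fin n → Bool) → ℂ) : ℝ :=
  ⨆ ε : Fin n → Bool, Real.sqrt (∑ i : Fin n, ‖pderiv i f ε‖ ^ 2)

/-!
The duality map `J_p x = ‖x‖ ^ (p - 2) x` is sectorial: `⟪J_p x - J_p y, x - y⟫` has argument at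
most `π / 2 - θ_p / 2`. Hence, for `|arg c| ≤ θ_p / 2`, the one-coordinate noise operator of
parameter `1 / (1 + c)`, which is the resolvent of a discrete derivative, is a contraction of
`L_p`, and so is the product `T_z` of these operators over all coordinates, for `z = 1 / (1 + c)`.

If `f` has degree at most `d`, then `z ↦ T_z f` is a polynomial of degree at most `d` whose
derivative at `z = 1` is `Δf`, and it is bounded by `‖f‖` on the lens of all such `z`, which has a
corner at `1`. Put `s = 2 - θ_p / π`. The substitution `c = -ζ ^ s` opens the complement of the lens
to the right half-plane, where Phragmén–Lindelöf bounds the polynomial off the lens. Cauchy's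
estimate on the circle `|c| = d ^ (-s)` around the corner then costs the factor `d ^ s`.
-/

section Sector

open Real (arccos)

/-- The closed sector of half-angle `α` about the positive real axis. It contains `0`, because
`Complex.arg 0 = 0`. -/
def sector (α : ℝ) : Set ℂ := {z | |z.arg| ≤ α}

theorem re_mul_nonneg_of_mem_sector {α β : ℝ} {z w : ℂ} (hz : z ∈ sector α) (hw : w ∈ sector β)
    (hαβ : α + β ≤ Real.pi / 2) : 0 ≤ (z * w).re := by
  have hre : (z * w).re = ‖z‖ * ‖w‖ * Real.cos (z.arg + w.arg) := by
    rw [Real.cos_add, Complex.mul_re, ← Complex.norm_mul_cos_arg z, ← Complex.norm_mul_cos_arg w,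
      ← Complex.norm_mul_sin_arg z, ← Complex.norm_mul_sin_arg w]
    ring
  rw [hre]
  refine mul_nonneg (by positivity) (Real.cos_nonneg_of_mem_Icc (abs_le.1 ?_))
  exact (abs_add_le _ _).trans ((add_le_add hz hw).trans hαβ)

theorem abs_arg_eq_arccos {z : ℂ} (hz : z ≠ 0) : |z.arg| = arccos (z.re / ‖z‖) := by
  rw [← Complex.cos_arg hz, ← Real.cos_abs,
    Real.arccos_cos (abs_nonneg _) (Complex.abs_arg_le_pi z)]

theorem mem_sector_arccos {κ : ℝ} {z : ℂ} (h : κ * ‖z‖ ≤ z.re) : z ∈ sector (arccos κ) := by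
  rcases eq_or_ne z 0 with rfl | hz
  · simpa [sector] using Real.arccos_nonneg κ
  · rw [sector, Set.mem_ofPred_eq, abs_arg_eq_arccos hz]
    exact Real.arccos_le_arccos ((le_div_iff₀ (norm_pos_iff.2 hz)).2 h)

theorem re_nonneg_of_mem_sector {α : ℝ} (hα : α ≤ Real.pi / 2) {z : ℂ} (hz : z ∈ sector α) :
    0 ≤ z.re :=
  Complex.abs_arg_le_pi_div_two_iff.1 (hz.trans hα)

theorem one_add_ne_zero_of_re_nonneg {z : ℂ} (hz : 0 ≤ z.re) : 1 + z ≠ 0 := fun h => by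
  have hre := congrArg Complex.re h
  simp only [Complex.add_re, Complex.one_re, Complex.zero_re] at hre
  linarith

theorem ofReal_mul_mem_sector {α : ℝ} {z : ℂ} (hz : z ∈ sector α) {r : ℝ} (hr : 0 < r) :
    (r : ℂ) * z ∈ sector α := by
  rwa [sector, Set.mem_ofPred_eq, Complex.arg_real_mul z hr]

theorem abs_arg_cpow_ofReal {z : ℂ} {s : ℝ} (h : |z.arg * s| ≤ Real.pi) :
    |(z ^ (s : ℂ)).arg| = |z.arg * s| := by
  rcases eq_or_ne (z ^ (s : ℂ)) 0 with hzs | hzs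
  · have hz : z = 0 := ((Complex.cpow_eq_zero_iff _ _).1 hzs).1
    rw [hzs, hz, Complex.arg_zero, zero_mul]
  · have hnorm : ‖z‖ ^ s ≠ 0 := by rwa [← Complex.norm_cpow_real, norm_ne_zero_iff]
    rw [abs_arg_eq_arccos hzs, Complex.cpow_ofReal_re, Complex.norm_cpow_real,
      mul_div_cancel_left₀ _ hnorm, ← Real.cos_abs, Real.arccos_cos (abs_nonneg _) h]

theorem abs_arg_neg {z : ℂ} (hz : z ≠ 0) : |(-z).arg| = Real.pi - |z.arg| := by
  rw [abs_arg_eq_arccos (neg_ne_zero.2 hz), abs_arg_eq_arccos hz, norm_neg, Complex.neg_re,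
    neg_div, Real.arccos_neg]

theorem mem_sector_of_abs_arg_neg_le {α : ℝ} (hα : 0 ≤ α) {z : ℂ} (h : Real.pi - α ≤ |(-z).arg|) :
    z ∈ sector α := by
  rcases eq_or_ne z 0 with rfl | hz
  · simpa [sector] using hα
  · rw [abs_arg_neg hz] at h
    exact show |z.arg| ≤ α by linarith

end Sector

section RpowInequalities

open Real (sinh cosh)

theorem sq_mul_cosh_sub_one_le {u w : ℝ} (huw : |u| ≤ |w|) :
    w ^ 2 * (cosh u - 1) ≤ u ^ 2 * (cosh w - 1) := by
  have hasSum_cosh_sub_one (x : ℝ) :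
      HasSum (fun k : ℕ => x ^ (2 * (k + 1)) / (2 * (k + 1)).factorial) (cosh x - 1) := by
    simpa using (hasSum_nat_add_iff' 1).2 (Real.hasSum_cosh x)
  refine hasSum_le (fun k => ?_) ((hasSum_cosh_sub_one u).mul_left (w ^ 2))
    ((hasSum_cosh_sub_one w).mul_left (u ^ 2))
  have hpow : u ^ (2 * k) ≤ w ^ (2 * k) := by
    rw [pow_mul, pow_mul]
    exact pow_le_pow_left₀ (sq_nonneg u) (sq_le_sq.2 huw) k
  calc w ^ 2 * (u ^ (2 * (k + 1)) / (2 * (k + 1)).factorial)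
      = u ^ 2 * w ^ 2 / (2 * (k + 1)).factorial * u ^ (2 * k) := by ring
    _ ≤ u ^ 2 * w ^ 2 / (2 * (k + 1)).factorial * w ^ (2 * k) := by gcongr
    _ = u ^ 2 * (w ^ (2 * (k + 1)) / (2 * (k + 1)).factorial) := by ring

theorem four_mul_sinh_sq_le {q : ℝ} (hq : 0 ≤ q) (v : ℝ) :
    4 * q * sinh ((q - 1) * v / 2) ^ 2 ≤ (q - 1) ^ 2 * (sinh v * sinh (q * v)) := by
  rcases eq_or_ne v 0 with rfl | hv
  · simp
  have habs : |(q - 1) * v| ≤ |(q + 1) * v| := by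
    rw [abs_mul, abs_mul]
    refine mul_le_mul_of_nonneg_right ?_ (abs_nonneg v)
    exact abs_le_abs (by linarith) (by linarith)
  have hcosh : (q + 1) ^ 2 * (cosh ((q - 1) * v) - 1) ≤
      (q - 1) ^ 2 * (cosh ((q + 1) * v) - 1) := by
    have hv2 : 0 < v ^ 2 := by positivity
    refine le_of_mul_le_mul_left ?_ hv2
    linarith [sq_mul_cosh_sub_one_le habs]
  have hadd : cosh ((q + 1) * v) = cosh (q * v) * cosh v + sinh (q * v) * sinh v := by
    rw [add_mul, one_mul, Real.cosh_add]
  have hsub : cosh ((q - 1) * v) = cosh (q * v) * cosh v - sinh (q * v) * sinh v := by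
    rw [sub_mul, one_mul, Real.cosh_sub]
  have hhalf : cosh ((q - 1) * v) = 1 + 2 * sinh ((q - 1) * v / 2) ^ 2 := by
    rw [show (q - 1) * v = 2 * ((q - 1) * v / 2) by ring, Real.cosh_two_mul, Real.cosh_sq]
    ring_nf
  have hdiff : cosh ((q + 1) * v) = cosh ((q - 1) * v) + 2 * (sinh v * sinh (q * v)) := by
    linarith
  rw [hdiff, hhalf] at hcosh
  linarith

theorem four_mul_sq_rpow_sub_rpow_le {p r t : ℝ} (hp : 1 ≤ p) (hr : 0 < r) (ht : 0 < t) :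
    4 * (p - 1) * (r * t * (r ^ (p - 2) - t ^ (p - 2))) ^ 2 ≤
      (p - 2) ^ 2 * ((r ^ p + t ^ p) ^ 2 - (r * t * (r ^ (p - 2) + t ^ (p - 2))) ^ 2) := by
  obtain ⟨a, rfl⟩ : ∃ a, r = Real.exp a := ⟨Real.log r, (Real.exp_log hr).symm⟩
  obtain ⟨b, rfl⟩ : ∃ b, t = Real.exp b := ⟨Real.log t, (Real.exp_log ht).symm⟩
  simp only [← Real.exp_mul]
  -- Dividing out the geometric mean `E` leaves only hyperbolic functions of `a - b`.
  set E := Real.exp (p * (a + b) / 2) with hE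
  have hsub : Real.exp a * Real.exp b * (Real.exp (a * (p - 2)) - Real.exp (b * (p - 2))) =
      E * (2 * sinh ((p - 1 - 1) * (a - b) / 2)) := by
    rw [Real.sinh_eq, hE]
    ring_nf
    simp only [← Real.exp_add]
    ring_nf
  have hadd : (Real.exp (a * p) + Real.exp (b * p)) ^ 2 -
      (Real.exp a * Real.exp b * (Real.exp (a * (p - 2)) + Real.exp (b * (p - 2)))) ^ 2 =
      E ^ 2 * (4 * (sinh (a - b) * sinh ((p - 1) * (a - b)))) := by
    rw [Real.sinh_eq, Real.sinh_eq, hE]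
    ring_nf
    simp only [← Real.exp_add, ← Real.exp_nat_mul]
    ring_nf
  rw [hsub, hadd]
  calc 4 * (p - 1) * (E * (2 * sinh ((p - 1 - 1) * (a - b) / 2))) ^ 2
      = 4 * E ^ 2 * (4 * (p - 1) * sinh ((p - 1 - 1) * (a - b) / 2) ^ 2) := by ring
    _ ≤ 4 * E ^ 2 * ((p - 1 - 1) ^ 2 * (sinh (a - b) * sinh ((p - 1) * (a - b)))) := by
        exact mul_le_mul_of_nonneg_left (four_mul_sinh_sq_le (sub_nonneg.2 hp) (a - b))
          (by positivity)
    _ = (p - 2) ^ 2 * (E ^ 2 * (4 * (sinh (a - b) * sinh ((p - 1) * (a - b))))) := by ring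

theorem mul_rpow_add_rpow_le {p r t : ℝ} (hp : 1 ≤ p) (hr : 0 < r) (ht : 0 < t) :
    r * t * (r ^ (p - 2) + t ^ (p - 2)) ≤ r ^ p + t ^ p := by
  have hpow {z : ℝ} (hz : 0 < z) : z ^ (p - 2) * z = z ^ (p - 1) ∧ z ^ (p - 1) * z = z ^ p := by
    constructor <;> rw [← Real.rpow_add_one hz.ne'] <;> ring_nf
  have hmono : 0 ≤ (r ^ (p - 1) - t ^ (p - 1)) * (r - t) := by
    rcases le_total r t with h | h
    · exact mul_nonneg_of_nonpos_of_nonpos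
        (sub_nonpos.2 (Real.rpow_le_rpow hr.le h (by linarith))) (sub_nonpos.2 h)
    · exact mul_nonneg (sub_nonneg.2 (Real.rpow_le_rpow ht.le h (by linarith))) (sub_nonneg.2 h)
  rw [← (hpow hr).2, ← (hpow ht).2, mul_add]
  linear_combination hmono + t * (hpow hr).1 + r * (hpow ht).1

end RpowInequalities

section SectorialDualityMap

open Real (arccos)
open scoped InnerProductSpace

/-- The duality map `J_p x = ‖x‖ ^ (p - 2) • x`, the gradient of `‖x‖ ^ p / p`; it gives the
norming functionals of `L_p`. -/
def dualityMap {E : Type*} [NormedAddCommGroup E] [NormedSpace ℝ E] (p : ℝ) (x : E) : E :=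
  ‖x‖ ^ (p - 2) • x

variable {H : Type*} [NormedAddCommGroup H] [InnerProductSpace ℂ H]

theorem norm_dualityMap_le {E : Type*} [NormedAddCommGroup E] [NormedSpace ℝ E] (p : ℝ) (x : E) :
    ‖dualityMap p x‖ ≤ ‖x‖ ^ (p - 1) := by
  rcases eq_or_ne x 0 with rfl | hx
  · simpa [dualityMap] using Real.zero_rpow_nonneg _
  · rw [dualityMap, norm_smul, Real.norm_of_nonneg (by positivity),
      ← Real.rpow_add_one (norm_ne_zero_iff.2 hx)]
    ring_nf
    exact le_rfl

theorem rpow_sub_two_mul_sq {p r : ℝ} (hp : p ≠ 0) (hr : 0 ≤ r) : r ^ (p - 2) * r ^ 2 = r ^ p := by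
  rcases hr.eq_or_lt with rfl | hr
  · simp [Real.zero_rpow hp]
  · rw [← Real.rpow_natCast, ← Real.rpow_add hr]
    norm_num

theorem re_inner_dualityMap_self {p : ℝ} (hp : p ≠ 0) (x : H) :
    (⟪dualityMap p x, x⟫_ℂ).re = ‖x‖ ^ p := by
  rw [dualityMap, ← Complex.coe_smul, inner_smul_left, Complex.conj_ofReal, Complex.re_ofReal_mul,
    ← rpow_sub_two_mul_sq hp (norm_nonneg x)]
  exact congrArg _ (inner_self_eq_norm_sq (𝕜 := ℂ) x)

theorem inner_dualityMap_sub {p : ℝ} (hp : p ≠ 0) (x y : H) :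
    ⟪dualityMap p x - dualityMap p y, x - y⟫_ℂ =
      ((‖x‖ ^ p + ‖y‖ ^ p : ℝ) : ℂ) - (‖x‖ ^ (p - 2) : ℝ) * ⟪x, y⟫_ℂ -
        (‖y‖ ^ (p - 2) : ℝ) * ⟪y, x⟫_ℂ := by
  rw [← rpow_sub_two_mul_sq hp (norm_nonneg x), ← rpow_sub_two_mul_sq hp (norm_nonneg y)]
  simp only [dualityMap, inner_sub_left, inner_sub_right, ← Complex.coe_smul, inner_smul_left,
    inner_self_eq_norm_sq_to_K, Complex.conj_ofReal]
  push_cast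
  simp only [Complex.coe_algebraMap]
  ring

theorem re_inner_dualityMap_sub {p : ℝ} (hp : p ≠ 0) (x y : H) :
    (⟪dualityMap p x - dualityMap p y, x - y⟫_ℂ).re =
      ‖x‖ ^ p + ‖y‖ ^ p - (⟪x, y⟫_ℂ).re * (‖x‖ ^ (p - 2) + ‖y‖ ^ (p - 2)) := by
  rw [inner_dualityMap_sub hp, ← inner_conj_symm y x]
  simp only [Complex.sub_re, Complex.ofReal_re, Complex.re_ofReal_mul, Complex.conj_re]
  ring

theorem im_inner_dualityMap_sub {p : ℝ} (hp : p ≠ 0) (x y : H) :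
    (⟪dualityMap p x - dualityMap p y, x - y⟫_ℂ).im =
      -((⟪x, y⟫_ℂ).im * (‖x‖ ^ (p - 2) - ‖y‖ ^ (p - 2))) := by
  rw [inner_dualityMap_sub hp, ← inner_conj_symm y x]
  simp only [Complex.sub_im, Complex.ofReal_im, Complex.im_ofReal_mul, Complex.conj_im]
  ring

theorem re_inner_dualityMap_sub_nonneg {p : ℝ} (hp : 1 ≤ p) (x y : H) :
    0 ≤ (⟪dualityMap p x - dualityMap p y, x - y⟫_ℂ).re := by
  rw [re_inner_dualityMap_sub (by linarith)]
  rcases eq_or_ne x 0 with rfl | hx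
  · simp only [inner_zero_left, Complex.zero_re, zero_mul, sub_zero]
    positivity
  rcases eq_or_ne y 0 with rfl | hy
  · simp only [inner_zero_right, Complex.zero_re, zero_mul, sub_zero]
    positivity
  have hCS : (⟪x, y⟫_ℂ).re ≤ ‖x‖ * ‖y‖ := re_inner_le_norm (𝕜 := ℂ) x y
  have hsum := mul_rpow_add_rpow_le hp (norm_pos_iff.2 hx) (norm_pos_iff.2 hy)
  have hA : 0 ≤ ‖x‖ ^ (p - 2) + ‖y‖ ^ (p - 2) := by positivity
  linarith [mul_le_mul_of_nonneg_right hCS hA]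

theorem four_mul_im_inner_dualityMap_sub_sq_le {p : ℝ} (hp : 1 ≤ p) (x y : H) :
    4 * (p - 1) * (⟪dualityMap p x - dualityMap p y, x - y⟫_ℂ).im ^ 2 ≤
      (p - 2) ^ 2 * (⟪dualityMap p x - dualityMap p y, x - y⟫_ℂ).re ^ 2 := by
  rw [re_inner_dualityMap_sub (by linarith), im_inner_dualityMap_sub (by linarith)]
  rcases eq_or_ne x 0 with rfl | hx
  · simp only [inner_zero_left, Complex.zero_im, zero_mul, neg_zero, ne_eq, OfNat.ofNat_ne_zero,
      not_false_eq_true, zero_pow, mul_zero]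
    positivity
  rcases eq_or_ne y 0 with rfl | hy
  · simp only [inner_zero_right, Complex.zero_im, zero_mul, neg_zero, ne_eq, OfNat.ofNat_ne_zero,
      not_false_eq_true, zero_pow, mul_zero]
    positivity
  have hx0 : 0 < ‖x‖ := norm_pos_iff.2 hx
  have hy0 : 0 < ‖y‖ := norm_pos_iff.2 hy
  have hdiff := four_mul_sq_rpow_sub_rpow_le hp hx0 hy0
  have hsum := mul_rpow_add_rpow_le hp hx0 hy0
  have hCS : (⟪x, y⟫_ℂ).im ^ 2 ≤ (‖x‖ * ‖y‖) ^ 2 - (⟪x, y⟫_ℂ).re ^ 2 := by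
    have hsq := pow_le_pow_left₀ (norm_nonneg _) (norm_inner_le_norm (𝕜 := ℂ) x y) 2
    rw [Complex.sq_norm, Complex.normSq_apply] at hsq
    linarith
  set c := (⟪x, y⟫_ℂ).re
  set e := (⟪x, y⟫_ℂ).im
  set m := ‖x‖ * ‖y‖
  set N := ‖x‖ ^ p + ‖y‖ ^ p
  set A := ‖x‖ ^ (p - 2) + ‖y‖ ^ (p - 2)
  set B := ‖x‖ ^ (p - 2) - ‖y‖ ^ (p - 2)
  have hm : 0 < m := mul_pos hx0 hy0
  have hgap : 0 ≤ N ^ 2 - (m * A) ^ 2 :=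
    sub_nonneg.2 (pow_le_pow_left₀ (by positivity) hsum 2)
  refine le_of_mul_le_mul_left ?_ (pow_pos hm 2)
  calc m ^ 2 * (4 * (p - 1) * (-(e * B)) ^ 2)
      = e ^ 2 * (4 * (p - 1) * (m * B) ^ 2) := by ring
    _ ≤ e ^ 2 * ((p - 2) ^ 2 * (N ^ 2 - (m * A) ^ 2)) := by gcongr
    _ ≤ (m ^ 2 - c ^ 2) * ((p - 2) ^ 2 * (N ^ 2 - (m * A) ^ 2)) := by gcongr
    _ = (p - 2) ^ 2 * (m ^ 2 * (N - c * A) ^ 2 - (m ^ 2 * A - c * N) ^ 2) := by ring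
    _ ≤ (p - 2) ^ 2 * (m ^ 2 * (N - c * A) ^ 2) := by
        gcongr
        exact sub_le_self _ (sq_nonneg _)
    _ = m ^ 2 * ((p - 2) ^ 2 * (N - c * A) ^ 2) := by ring

theorem inner_dualityMap_sub_mem_sector {p : ℝ} (hp : 1 ≤ p) (x y : H) :
    ⟪dualityMap p x - dualityMap p y, x - y⟫_ℂ ∈ sector (arccos (2 * √(p - 1) / p)) := by
  have hre := re_inner_dualityMap_sub_nonneg hp x y
  have him := four_mul_im_inner_dualityMap_sub_sq_le hp x y
  set W := ⟪dualityMap p x - dualityMap p y, x - y⟫_ℂ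
  have hp0 : 0 < p := by linarith
  refine mem_sector_arccos ?_
  rw [div_mul_eq_mul_div, div_le_iff₀ hp0]
  refine le_of_sq_le_sq ?_ (by positivity)
  calc (2 * √(p - 1) * ‖W‖) ^ 2 = 4 * (p - 1) * (W.re ^ 2 + W.im ^ 2) := by
        rw [mul_pow, mul_pow, Real.sq_sqrt (by linarith), Complex.sq_norm, Complex.normSq_apply]
        ring
    _ ≤ 4 * (p - 1) * W.re ^ 2 + (p - 2) ^ 2 * W.re ^ 2 := by linarith
    _ = (W.re * p) ^ 2 := by ring

-- The left-hand side is the tangent at `x` to the convex function `‖·‖ ^ p`.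
theorem norm_rpow_add_mul_re_inner_dualityMap_le {p : ℝ} (hp : 1 ≤ p) (x y : H) :
    ‖x‖ ^ p + p * (⟪dualityMap p x, y - x⟫_ℂ).re ≤ ‖y‖ ^ p := by
  have hp0 : 0 < p := by linarith
  have hyoung : ‖x‖ ^ (p - 1) * ‖y‖ ≤ (1 - p⁻¹) * ‖x‖ ^ p + p⁻¹ * ‖y‖ ^ p := by
    have := Real.geom_mean_le_arith_mean2_weighted (sub_nonneg.2 (inv_le_one_of_one_le₀ hp))
      (inv_nonneg.2 hp0.le) (Real.rpow_nonneg (norm_nonneg x) p)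
      (Real.rpow_nonneg (norm_nonneg y) p) (by ring)
    rwa [← Real.rpow_mul (norm_nonneg x), ← Real.rpow_mul (norm_nonneg y), mul_inv_cancel₀ hp0.ne',
      Real.rpow_one, mul_sub, mul_one, mul_inv_cancel₀ hp0.ne'] at this
  have hinner : (⟪dualityMap p x, y⟫_ℂ).re ≤ ‖x‖ ^ (p - 1) * ‖y‖ :=
    (re_inner_le_norm (𝕜 := ℂ) _ _).trans (by gcongr; exact norm_dualityMap_le p x)
  rw [inner_sub_right, Complex.sub_re, re_inner_dualityMap_self hp0.ne']
  have := mul_le_mul_of_nonneg_left (hinner.trans hyoung) hp0.le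
  field_simp at this
  linarith

theorem sum_norm_rpow_le_of_re_sum_inner_dualityMap_nonneg {ι : Type*} [Fintype ι] {p : ℝ}
    (hp : 1 ≤ p) {u g : ι → H} (h : 0 ≤ ∑ i, (⟪dualityMap p (u i), g i - u i⟫_ℂ).re) :
    ∑ i, ‖u i‖ ^ p ≤ ∑ i, ‖g i‖ ^ p := by
  have hsum := Finset.sum_le_sum fun i (_ : i ∈ Finset.univ) =>
    norm_rpow_add_mul_re_inner_dualityMap_le hp (u i) (g i)
  rw [Finset.sum_add_distrib, ← Finset.mul_sum] at hsum
  linarith [mul_nonneg (by linarith : 0 ≤ p) h]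

end SectorialDualityMap

section PermutationNoise

open Real (arcsin)
open scoped InnerProductSpace

/-- The noise operator of parameter `z` along a permutation `σ`. For an involution `σ`, it fixes
the functions with `g ∘ σ = g` and multiplies those with `g ∘ σ = -g` by `z`. -/
def permNoise {ι E : Type*} [AddCommGroup E] [Module ℂ E] (z : ℂ) (σ : Equiv.Perm ι) (g : ι → E) :
    ι → E :=
  ((1 + z) / 2) • g + ((1 - z) / 2) • (g ∘ σ)

variable {ι : Type*} [Fintype ι] {σ : Equiv.Perm ι}
variable {H : Type*} [NormedAddCommGroup H] [InnerProductSpace ℂ H]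

theorem norm_toLp_permNoise_ofReal_le {p : ℝ≥0∞} [Fact (1 ≤ p)] {t : ℝ}
    (ht : t ∈ Set.Icc (-1) 1) (g : ι → X) :
    ‖WithLp.toLp p (permNoise t σ g)‖ ≤ ‖WithLp.toLp p g‖ := by
  have hcomp : ‖WithLp.toLp p (g ∘ σ)‖ = ‖WithLp.toLp p g‖ :=
    LinearIsometryEquiv.norm_map (LinearIsometryEquiv.piLpCongrLeft p ℂ X σ.symm) (WithLp.toLp p g)
  have hadd : ‖(1 + t : ℂ) / 2‖ = (1 + t) / 2 := by
    simpa using Complex.norm_of_nonneg (r := (1 + t) / 2) (by linarith [ht.1])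
  have hsub : ‖(1 - t : ℂ) / 2‖ = (1 - t) / 2 := by
    simpa using Complex.norm_of_nonneg (r := (1 - t) / 2) (by linarith [ht.2])
  calc ‖WithLp.toLp p (permNoise t σ g)‖
      ≤ ‖((1 + t : ℂ) / 2) • WithLp.toLp p g‖ + ‖((1 - t : ℂ) / 2) • WithLp.toLp p (g ∘ σ)‖ :=
        norm_add_le _ _
    _ = ‖WithLp.toLp p g‖ := by
        rw [norm_smul, norm_smul, hcomp, hadd, hsub]
        ring

theorem re_sum_inner_dualityMap_smul_sub_nonneg (hσ : Function.Involutive σ) {p : ℝ} (hp : 1 ≤ p)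
    {c : ℂ} (hc : c ∈ sector (arcsin (2 * √(p - 1) / p))) (u : ι → H) :
    0 ≤ ∑ i, (⟪dualityMap p (u i), c • (u i - u (σ i))⟫_ℂ).re := by
  set h : ι → ℝ := fun i => (⟪dualityMap p (u i), c • (u i - u (σ i))⟫_ℂ).re
  have hpair (i : ι) : 0 ≤ h i + h (σ i) := by
    have hsum : h i + h (σ i) =
        (c * ⟪dualityMap p (u i) - dualityMap p (u (σ i)), u i - u (σ i)⟫_ℂ).re := by
      simp only [h, hσ i, ← Complex.add_re, inner_smul_right, inner_sub_left, inner_sub_right]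
      ring_nf
    rw [hsum]
    refine re_mul_nonneg_of_mem_sector hc (inner_dualityMap_sub_mem_sector hp _ _) (le_of_eq ?_)
    rw [Real.arccos_eq_pi_div_two_sub_arcsin]
    ring
  have hsum := Finset.sum_nonneg fun i (_ : i ∈ Finset.univ) => hpair i
  rw [Finset.sum_add_distrib, Equiv.sum_comp σ h] at hsum
  linarith

theorem sum_norm_permNoise_rpow_le (hσ : Function.Involutive σ) {p : ℝ} (hp : 1 ≤ p)
    {c : ℂ} (hc : c ∈ sector (arcsin (2 * √(p - 1) / p))) (g : ι → H) :
    ∑ i, ‖permNoise (1 + c)⁻¹ σ g i‖ ^ p ≤ ∑ i, ‖g i‖ ^ p := by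
  have hc0 : 1 + c ≠ 0 :=
    one_add_ne_zero_of_re_nonneg (re_nonneg_of_mem_sector (Real.arcsin_le_pi_div_two _) hc)
  set u := permNoise (1 + c)⁻¹ σ g with hu
  -- `u` is the resolvent of `g ↦ (g - g ∘ σ) / 2` at `g`.
  have hg (i : ι) : g i - u i = (c / 2) • (u i - u (σ i)) := by
    simp only [hu, permNoise, Pi.add_apply, Pi.smul_apply, Function.comp_apply, hσ i]
    match_scalars <;> field_simp <;> ring
  have hc2 : c / 2 ∈ sector (arcsin (2 * √(p - 1) / p)) := by
    simpa [div_eq_inv_mul] using ofReal_mul_mem_sector hc (r := 2⁻¹) (by norm_num)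
  refine sum_norm_rpow_le_of_re_sum_inner_dualityMap_nonneg hp ?_
  simp only [hg]
  exact re_sum_inner_dualityMap_smul_sub_nonneg hσ hp hc2 u

/-- The half-angle `θ_p / 2 = arcsin (2√(p - 1) / p)` of the sector of all `c` for which the noise
operators of parameter `(1 + c)⁻¹` are contractions of `L_p`. -/
def sectorAngle (p : ℝ≥0∞) : ℝ :=
  if p = ⊤ then 0 else arcsin (2 * √(p.toReal - 1) / p.toReal)

theorem sectorAngle_nonneg (p : ℝ≥0∞) : 0 ≤ sectorAngle p := by
  rw [sectorAngle]
  split_ifs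
  · exact le_rfl
  · exact Real.arcsin_nonneg.2 (by positivity)

theorem sectorAngle_le_pi_div_two (p : ℝ≥0∞) : sectorAngle p ≤ Real.pi / 2 := by
  rw [sectorAngle]
  split_ifs
  · positivity
  · exact Real.arcsin_le_pi_div_two _

theorem norm_toLp_permNoise_le {p : ℝ≥0∞} [Fact (1 ≤ p)] (hσ : Function.Involutive σ) {c : ℂ}
    (hc : c ∈ sector (sectorAngle p)) (g : ι → H) :
    ‖WithLp.toLp p (permNoise (1 + c)⁻¹ σ g)‖ ≤ ‖WithLp.toLp p g‖ := by
  rw [sectorAngle] at hc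
  split_ifs at hc with htop
  · have harg : c.arg = 0 := abs_nonpos_iff.1 hc
    obtain ⟨r, hr, rfl⟩ : ∃ r : ℝ, 0 ≤ r ∧ (r : ℂ) = c :=
      ⟨‖c‖, norm_nonneg c, by simpa [harg] using Complex.norm_mul_exp_arg_mul_I c⟩
    have hreal := norm_toLp_permNoise_ofReal_le (p := p) (σ := σ) (t := (1 + r)⁻¹)
      ⟨by linarith [show 0 ≤ (1 + r)⁻¹ by positivity], inv_le_one_of_one_le₀ (by linarith)⟩ g
    push_cast at hreal
    exact hreal
  · have hp1 : 1 ≤ p.toReal := (ENNReal.dichotomy p).resolve_left htop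
    rw [PiLp.norm_eq_sum (by linarith), PiLp.norm_eq_sum (by linarith)]
    exact Real.rpow_le_rpow (by positivity) (sum_norm_permNoise_rpow_le hσ hp1 hc g)
      (by positivity)

end PermutationNoise

section LensMarkov

open Complex (I)

/-- The divided difference `(1 - ζ ^ s) / (1 - ζ)`, with the removable singularity at `ζ = 1`
filled in. -/
def cpowSlope (s : ℝ) : ℂ → ℂ := dslope (fun ζ : ℂ => ζ ^ (s : ℂ)) 1

theorem one_sub_mul_cpowSlope (s : ℝ) (ζ : ℂ) : (1 - ζ) * cpowSlope s ζ = 1 - ζ ^ (s : ℂ) := by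
  have h := sub_smul_dslope (fun ζ : ℂ => ζ ^ (s : ℂ)) 1 ζ
  simp only [smul_eq_mul, Complex.one_cpow] at h
  rw [cpowSlope]
  linear_combination -h

theorem diffContOnCl_cpow {s : ℝ} (hs : 0 < s) :
    DiffContOnCl ℂ (fun ζ : ℂ => ζ ^ (s : ℂ)) {z | 0 < z.re} := by
  refine ⟨fun ζ hζ => ?_, fun ζ hζ => ?_⟩
  · exact (differentiableAt_id.cpow_const (Or.inl hζ)).differentiableWithinAt
  · rw [Complex.closure_setOfPred_lt_re] at hζ
    exact (Complex.continuousAt_cpow_const_of_re_pos (Or.inl hζ) (by simpa using hs))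
      |>.continuousWithinAt

theorem diffContOnCl_cpowSlope {s : ℝ} (hs : 0 < s) :
    DiffContOnCl ℂ (cpowSlope s) {z | 0 < z.re} := by
  have hnhds : {z : ℂ | 0 < z.re} ∈ nhds 1 :=
    (isOpen_lt continuous_const Complex.continuous_re).mem_nhds (by simp)
  have hcpow := diffContOnCl_cpow hs
  exact ⟨(Complex.differentiableOn_dslope hnhds).2 hcpow.1,
    (continuousOn_dslope (Filter.mem_of_superset hnhds subset_closure)).2
      ⟨hcpow.2, hcpow.1.differentiableAt hnhds⟩⟩

theorem abs_arg_mul_le_pi {s : ℝ} (hs0 : 0 ≤ s) (hs2 : s ≤ 2) {ζ : ℂ} (hζ : 0 ≤ ζ.re) :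
    |ζ.arg * s| ≤ Real.pi := by
  rw [abs_mul, abs_of_nonneg hs0]
  calc |ζ.arg| * s ≤ Real.pi / 2 * 2 := by
        gcongr
        exact Complex.abs_arg_le_pi_div_two_iff.2 hζ
    _ = Real.pi := by ring

theorem eq_one_of_cpow_eq_one {s : ℝ} (hs0 : 0 < s) (hs2 : s ≤ 2) {ζ : ℂ} (hζ : 0 ≤ ζ.re)
    (h : ζ ^ (s : ℂ) = 1) : ζ = 1 := by
  have hnorm : ‖ζ‖ ^ s = 1 := by rw [← Complex.norm_cpow_real, h, norm_one]
  have harg := abs_arg_cpow_ofReal (abs_arg_mul_le_pi hs0.le hs2 hζ)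
  rw [h, Complex.arg_one, abs_zero, eq_comm, abs_eq_zero] at harg
  refine Complex.ext_norm_arg ?_ ?_
  · rw [norm_one]
    exact (Real.rpow_left_inj (norm_nonneg ζ) zero_le_one hs0.ne').1 (by rwa [Real.one_rpow])
  · rw [Complex.arg_one]
    exact (mul_eq_zero.1 harg).resolve_right hs0.ne'

theorem cpowSlope_ne_zero {s : ℝ} (hs0 : 0 < s) (hs2 : s ≤ 2) {ζ : ℂ} (hζ : 0 ≤ ζ.re) :
    cpowSlope s ζ ≠ 0 := by
  rcases eq_or_ne ζ 1 with rfl | hζ1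
  · have hderiv : HasDerivAt (fun ζ : ℂ => ζ ^ (s : ℂ)) (s * 1 ^ ((s : ℂ) - 1) * 1) 1 :=
      (hasDerivAt_id (1 : ℂ)).cpow_const (by simp)
    rw [cpowSlope, dslope_same, hderiv.deriv]
    simpa using hs0.ne'
  · intro h0
    have hmul := one_sub_mul_cpowSlope s ζ
    rw [h0, mul_zero] at hmul
    exact hζ1 (eq_one_of_cpow_eq_one hs0 hs2 hζ (sub_eq_zero.1 hmul.symm).symm)

section Algebra

variable {V : Type*} [AddCommGroup V] [Module ℂ V]

/-- The value at `z` of the polynomial of degree `d` with the vector coefficients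
`a 0, …, a d`. -/
def vecPoly (a : ℕ → V) (d : ℕ) (z : ℂ) : V := ∑ k ∈ Finset.range (d + 1), z ^ k • a k

theorem vecPoly_inv (a : ℕ → V) (d : ℕ) {w : ℂ} (hw : w ≠ 0) :
    vecPoly a d w⁻¹ = (w⁻¹) ^ d • ∑ k ∈ Finset.range (d + 1), w ^ (d - k) • a k := by
  rw [vecPoly, Finset.smul_sum]
  refine Finset.sum_congr rfl fun k hk => ?_
  have hkd : k ≤ d := Nat.lt_succ_iff.1 (Finset.mem_range.1 hk)
  rw [smul_smul, inv_pow, inv_pow, pow_sub₀ w hw hkd, inv_mul_cancel_left₀ (pow_ne_zero d hw)]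

/-- The transplant `((1 - ζ) / (1 + ζ)) ^ d • P (1 / (1 - ζ ^ s))` to the right half-plane of the
polynomial `P` with coefficients `a 0, …, a d`. It is written so as to make sense at the pole
`ζ = 1` of `1 / (1 - ζ ^ s)`, which the first factor cancels. -/
def transplant (s : ℝ) (a : ℕ → V) (d : ℕ) (ζ : ℂ) : V :=
  ((1 + ζ) * cpowSlope s ζ)⁻¹ ^ d •
    ∑ k ∈ Finset.range (d + 1), (1 - ζ ^ (s : ℂ)) ^ (d - k) • a k

theorem transplant_eq_smul_vecPoly {s : ℝ} (hs0 : 0 < s) (hs2 : s ≤ 2) (a : ℕ → V) (d : ℕ) {ζ : ℂ}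
    (hζ : 0 ≤ ζ.re) (hζ1 : ζ ≠ 1) :
    transplant s a d ζ = ((1 - ζ) / (1 + ζ)) ^ d • vecPoly a d (1 - ζ ^ (s : ℂ))⁻¹ := by
  have hsub : 1 - ζ ≠ 0 := sub_ne_zero.2 hζ1.symm
  have hslope := cpowSlope_ne_zero hs0 hs2 hζ
  have hcpow : 1 - ζ ^ (s : ℂ) ≠ 0 := by
    rw [← one_sub_mul_cpowSlope]
    exact mul_ne_zero hsub hslope
  rw [transplant, vecPoly_inv a d hcpow, smul_smul, ← mul_pow]
  congr 2
  have hadd := one_add_ne_zero_of_re_nonneg hζ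
  rw [← one_sub_mul_cpowSlope]
  field_simp

end Algebra

variable {E : Type*} [NormedAddCommGroup E] [NormedSpace ℂ E]

theorem norm_vecPoly_le (a : ℕ → E) (d : ℕ) {z : ℂ} (hz : ‖z‖ ≤ 1) :
    ‖vecPoly a d z‖ ≤ ∑ k ∈ Finset.range (d + 1), ‖a k‖ := by
  refine (norm_sum_le _ _).trans (Finset.sum_le_sum fun k _ => ?_)
  rw [norm_smul, norm_pow]
  exact mul_le_of_le_one_left (norm_nonneg _) (pow_le_one₀ (norm_nonneg z) hz)

theorem norm_one_sub_div_one_add_le_one {ζ : ℂ} (hζ : 0 ≤ ζ.re) : ‖(1 - ζ) / (1 + ζ)‖ ≤ 1 := by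
  rw [norm_div, div_le_one (norm_pos_iff.2 (one_add_ne_zero_of_re_nonneg hζ))]
  refine le_of_sq_le_sq ?_ (norm_nonneg _)
  simp only [Complex.sq_norm, Complex.normSq_apply, Complex.sub_re, Complex.add_re, Complex.sub_im,
    Complex.add_im, Complex.one_re, Complex.one_im]
  linarith

theorem norm_transplant_le_norm_vecPoly {s : ℝ} (hs0 : 0 < s) (hs2 : s ≤ 2) (a : ℕ → E) (d : ℕ)
    {ζ : ℂ} (hζ : 0 ≤ ζ.re) (hζ1 : ζ ≠ 1) :
    ‖transplant s a d ζ‖ ≤ ‖vecPoly a d (1 - ζ ^ (s : ℂ))⁻¹‖ := by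
  rw [transplant_eq_smul_vecPoly hs0 hs2 a d hζ hζ1, norm_smul, norm_pow]
  exact mul_le_of_le_one_left (norm_nonneg _)
    (pow_le_one₀ (norm_nonneg _) (norm_one_sub_div_one_add_le_one hζ))

theorem diffContOnCl_transplant {s : ℝ} (hs0 : 0 < s) (hs2 : s ≤ 2) (a : ℕ → E) (d : ℕ) :
    DiffContOnCl ℂ (transplant s a d) {z | 0 < z.re} := by
  refine DiffContOnCl.smul ((differentiable_id.pow d).comp_diffContOnCl ?_) ?_
  · refine DiffContOnCl.inv (f := fun ζ => (1 + ζ) * cpowSlope s ζ)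
      ((differentiable_id.const_add 1).diffContOnCl.smul (diffContOnCl_cpowSlope hs0))
      fun ζ hζ => ?_
    rw [Complex.closure_setOfPred_lt_re] at hζ
    exact mul_ne_zero (one_add_ne_zero_of_re_nonneg hζ) (cpowSlope_ne_zero hs0 hs2 hζ)
  · have hpoly : Differentiable ℂ fun w : ℂ =>
        ∑ k ∈ Finset.range (d + 1), (1 - w) ^ (d - k) • a k := by fun_prop
    exact hpoly.comp_diffContOnCl (diffContOnCl_cpow hs0)

theorem norm_transplant_le_sum {s : ℝ} (hs1 : 1 ≤ s) (hs2 : s ≤ 2) (a : ℕ → E) (d : ℕ) {ζ : ℂ}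
    (hζ : 0 ≤ ζ.re) (hζ2 : 2 ≤ ‖ζ‖) :
    ‖transplant s a d ζ‖ ≤ ∑ k ∈ Finset.range (d + 1), ‖a k‖ := by
  have hζ1 : ζ ≠ 1 := by
    rintro rfl
    norm_num at hζ2
  refine (norm_transplant_le_norm_vecPoly (by linarith) hs2 a d hζ hζ1).trans
    (norm_vecPoly_le a d ?_)
  rw [norm_inv]
  refine inv_le_one_of_one_le₀ ?_
  calc 1 ≤ ‖ζ‖ - 1 := by linarith
    _ ≤ ‖ζ‖ ^ s - 1 := by
        gcongr
        exact Real.self_le_rpow_of_one_le (by linarith) hs1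
    _ ≤ ‖1 - ζ ^ (s : ℂ)‖ := by
        rw [norm_sub_rev, ← Complex.norm_cpow_real, ← norm_one (α := ℂ)]
        exact norm_sub_norm_le _ _

theorem neg_cpow_mul_I_mem_sector {s : ℝ} (hs0 : 0 < s) (hs2 : s ≤ 2) (y : ℝ) :
    -((y * I : ℂ) ^ (s : ℂ)) ∈ sector (Real.pi * (1 - s / 2)) := by
  have hα : 0 ≤ Real.pi * (1 - s / 2) := mul_nonneg Real.pi_pos.le (by linarith)
  rcases eq_or_ne y 0 with rfl | hy
  · have hs : (s : ℂ) ≠ 0 := by exact_mod_cast hs0.ne'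
    simpa [sector, hs] using hα
  refine mem_sector_of_abs_arg_neg_le hα ?_
  have harg : |(y * I : ℂ).arg| = Real.pi / 2 := by
    rw [abs_arg_eq_arccos (by simpa using hy)]
    simp
  rw [neg_neg, abs_arg_cpow_ofReal (abs_arg_mul_le_pi hs0.le hs2 (by simp)), abs_mul, harg,
    abs_of_pos hs0]
  linarith

theorem norm_transplant_le {s : ℝ} (hs1 : 1 ≤ s) (hs2 : s ≤ 2) {a : ℕ → E} {d : ℕ} {M : ℝ}
    (hM : ∀ c ∈ sector (Real.pi * (1 - s / 2)), ‖vecPoly a d (1 + c)⁻¹‖ ≤ M) {ζ : ℂ}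
    (hζ : 0 ≤ ζ.re) : ‖transplant s a d ζ‖ ≤ M := by
  have hs0 : 0 < s := by linarith
  refine PhragmenLindelof.right_half_plane_of_bounded_on_real
    (diffContOnCl_transplant hs0 hs2 a d) ⟨0, two_pos, 0, ?_⟩ ?_ (fun y => ?_) hζ
  · refine Asymptotics.IsBigO.of_bound (∑ k ∈ Finset.range (d + 1), ‖a k‖) ?_
    rw [Filter.eventually_inf_principal]
    filter_upwards [tendsto_norm_cobounded_atTop.eventually_ge_atTop 2] with z hz2 hz0
    simpa using norm_transplant_le_sum hs1 hs2 a d (le_of_lt hz0) hz2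
  · refine Filter.isBoundedUnder_of_eventually_le (a := ∑ k ∈ Finset.range (d + 1), ‖a k‖) ?_
    filter_upwards [Filter.eventually_ge_atTop 2] with x hx
    have hx0 : 0 ≤ x := by linarith
    exact norm_transplant_le_sum hs1 hs2 a d (by simpa using hx0)
      (by rwa [Complex.norm_of_nonneg hx0])
  · have hne : (y * I : ℂ) ≠ 1 := fun h => by simpa using congrArg Complex.re h
    refine (norm_transplant_le_norm_vecPoly hs0 hs2 a d (by simp) hne).trans ?_
    simpa [sub_eq_add_neg] using hM _ (neg_cpow_mul_I_mem_sector hs0 hs2 y)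

theorem exists_cpow_eq_neg {s : ℝ} (hs1 : 1 ≤ s) {c : ℂ}
    (hc : Real.pi * (1 - s / 2) ≤ |c.arg|) (hc0 : c ≠ 0) :
    ∃ ζ : ℂ, 0 ≤ ζ.re ∧ ζ ^ (s : ℂ) = -c := by
  have hs0 : 0 < s := by linarith
  have harg : |(-c).arg * s⁻¹| ≤ Real.pi / 2 := by
    rw [abs_mul, abs_of_pos (inv_pos.2 hs0), ← div_eq_mul_inv, div_le_iff₀ hs0, abs_arg_neg hc0]
    linarith
  have hpi := Real.pi_pos
  refine ⟨(-c) ^ ((s⁻¹ : ℝ) : ℂ), Complex.abs_arg_le_pi_div_two_iff.1 ?_, ?_⟩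
  · rwa [abs_arg_cpow_ofReal (by linarith)]
  · have him : (Complex.log (-c) * ((s⁻¹ : ℝ) : ℂ)).im = (-c).arg * s⁻¹ := by
      rw [Complex.im_mul_ofReal, Complex.log_im]
    rw [← Complex.cpow_mul, ← Complex.ofReal_mul, inv_mul_cancel₀ hs0.ne', Complex.ofReal_one,
      Complex.cpow_one]
    · rw [him]
      linarith [neg_le_of_abs_le harg]
    · rw [him]
      linarith [le_of_abs_le harg]

theorem norm_vecPoly_le_of_norm_eq_rpow {s : ℝ} (hs1 : 1 ≤ s) (hs2 : s ≤ 2) {a : ℕ → E} {d : ℕ}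
    {M : ℝ} (hM : ∀ c ∈ sector (Real.pi * (1 - s / 2)), ‖vecPoly a d (1 + c)⁻¹‖ ≤ M) {ρ : ℝ}
    (hρ0 : 0 < ρ) (hρ1 : ρ < 1) {c : ℂ} (hc : ‖c‖ = ρ ^ s) :
    ‖vecPoly a d (1 + c)⁻¹‖ ≤ ((1 + ρ) / (1 - ρ)) ^ d * M := by
  have hs0 : 0 < s := by linarith
  have hratio : 0 < (1 - ρ) / (1 + ρ) := div_pos (by linarith) (by linarith)
  rw [← inv_div, inv_pow, ← div_eq_inv_mul, le_div_iff₀ (pow_pos hratio d), mul_comm]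
  by_cases hmem : c ∈ sector (Real.pi * (1 - s / 2))
  · refine (mul_le_of_le_one_left (norm_nonneg _) (pow_le_one₀ hratio.le ?_)).trans (hM c hmem)
    rw [div_le_one (by linarith)]
    linarith
  have hc0 : c ≠ 0 := by
    rw [← norm_pos_iff, hc]
    positivity
  obtain ⟨ζ, hζ, hζc⟩ := exists_cpow_eq_neg hs1 (le_of_not_ge hmem) hc0
  have hnorm : ‖ζ‖ = ρ := by
    rw [← Real.rpow_left_inj (norm_nonneg ζ) hρ0.le hs0.ne', ← Complex.norm_cpow_real, hζc,
      norm_neg, hc]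
  have hζ1 : ζ ≠ 1 := by
    rintro rfl
    exact hρ1.ne (hnorm.symm.trans norm_one)
  have hlow : (1 - ρ) / (1 + ρ) ≤ ‖(1 - ζ) / (1 + ζ)‖ := by
    rw [norm_div, ← hnorm, ← norm_one (α := ℂ)]
    have hpos := norm_pos_iff.2 (one_add_ne_zero_of_re_nonneg hζ)
    gcongr
    · exact norm_sub_norm_le 1 ζ
    · exact norm_add_le 1 ζ
  calc ((1 - ρ) / (1 + ρ)) ^ d * ‖vecPoly a d (1 + c)⁻¹‖
      ≤ ‖(1 - ζ) / (1 + ζ)‖ ^ d * ‖vecPoly a d (1 + c)⁻¹‖ := by gcongr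
    _ = ‖transplant s a d ζ‖ := by
        rw [transplant_eq_smul_vecPoly hs0 hs2 a d hζ hζ1, hζc, sub_neg_eq_add, norm_smul, norm_pow]
    _ ≤ M := norm_transplant_le hs1 hs2 hM hζ

theorem hasDerivAt_vecPoly (a : ℕ → E) (d : ℕ) (z : ℂ) :
    HasDerivAt (vecPoly a d) (∑ k ∈ Finset.range (d + 1), (k * z ^ (k - 1)) • a k) z :=
  HasDerivAt.fun_sum fun k _ => (hasDerivAt_pow k z).smul_const (a k)

theorem norm_sum_natCast_smul_le_div {s : ℝ} (hs1 : 1 ≤ s) (hs2 : s ≤ 2) {a : ℕ → E} {d : ℕ} {M : ℝ}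
    (hM : ∀ c ∈ sector (Real.pi * (1 - s / 2)), ‖vecPoly a d (1 + c)⁻¹‖ ≤ M) {ρ : ℝ}
    (hρ0 : 0 < ρ) (hρ1 : ρ < 1) :
    ‖∑ k ∈ Finset.range (d + 1), (k : ℂ) • a k‖ ≤ ((1 + ρ) / (1 - ρ)) ^ d * M / ρ ^ s := by
  have hne : ∀ c ∈ Metric.closedBall (0 : ℂ) (ρ ^ s), 1 + c ≠ 0 := by
    intro c hc h0
    rw [mem_closedBall_zero_iff, eq_neg_of_add_eq_zero_right h0, norm_neg, norm_one] at hc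
    exact hc.not_gt (Real.rpow_lt_one hρ0.le hρ1 (by linarith))
  have hinv {c : ℂ} (hc : 1 + c ≠ 0) : HasDerivAt (fun c => (1 + c)⁻¹) (-1 / (1 + c) ^ 2) c :=
    ((hasDerivAt_id c).const_add 1).fun_inv hc
  have hderiv := (hasDerivAt_vecPoly a d (1 + 0)⁻¹).scomp 0 (hinv (c := 0) (by simp))
  have hdiff : DiffContOnCl ℂ (vecPoly a d ∘ fun c : ℂ => (1 + c)⁻¹) (Metric.ball 0 (ρ ^ s)) :=
    DifferentiableOn.diffContOnCl_ball (fun c hc =>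
      ((hasDerivAt_vecPoly a d _).scomp c (hinv (hne c hc))).differentiableAt
        |>.differentiableWithinAt) subset_rfl
  have hCauchy := Complex.norm_deriv_le_of_forall_mem_sphere_norm_le (by positivity) hdiff
    fun c hc => norm_vecPoly_le_of_norm_eq_rpow hs1 hs2 hM hρ0 hρ1 (mem_sphere_zero_iff_norm.1 hc)
  rw [hderiv.deriv] at hCauchy
  simpa using hCauchy

theorem one_add_inv_div_one_sub_inv_pow_le {d : ℕ} (hd : 2 ≤ d) :
    ((1 + (d : ℝ)⁻¹) / (1 - (d : ℝ)⁻¹)) ^ d ≤ 10 := by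
  obtain rfl | rfl | hd4 : d = 2 ∨ d = 3 ∨ 4 ≤ d := by lia
  · norm_num
  · norm_num
  obtain ⟨m, rfl⟩ : ∃ m, d = m + 1 := ⟨d - 1, by lia⟩
  have hm : (3 : ℝ) ≤ m := by exact_mod_cast (by lia : 3 ≤ m)
  have hm0 : (m : ℝ) ≠ 0 := by positivity
  have hinv : 1 + (m : ℝ)⁻¹ ≤ 4 / 3 := by
    have := inv_anti₀ (by norm_num) hm
    linarith
  have hsplit : ((1 + ((m + 1 : ℕ) : ℝ)⁻¹) / (1 - ((m + 1 : ℕ) : ℝ)⁻¹)) ^ (m + 1) =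
      (1 + ((m + 1 : ℕ) : ℝ)⁻¹) ^ (m + 1) * ((1 + (m : ℝ)⁻¹) ^ m * (1 + (m : ℝ)⁻¹)) := by
    have hsub : 1 - ((m + 1 : ℕ) : ℝ)⁻¹ = m / (m + 1) := by
      push_cast
      field_simp
      ring
    rw [← pow_succ, ← mul_pow, hsub]
    congr 1
    field_simp
  rw [hsplit]
  calc _ ≤ Real.exp 1 * (Real.exp 1 * (4 / 3)) := by
        gcongr
        · exact Real.one_add_inv_pow_le_exp
        · exact Real.one_add_inv_pow_le_exp
    _ ≤ 2.7182818286 * (2.7182818286 * (4 / 3)) := by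
        gcongr <;> exact Real.exp_one_lt_d9.le
    _ ≤ 10 := by norm_num

theorem norm_sum_natCast_smul_le {s : ℝ} (hs1 : 1 ≤ s) (hs2 : s ≤ 2) {a : ℕ → E} {d : ℕ} {M : ℝ}
    (hM : ∀ c ∈ sector (Real.pi * (1 - s / 2)), ‖vecPoly a d (1 + c)⁻¹‖ ≤ M) :
    ‖∑ k ∈ Finset.range (d + 1), (k : ℂ) • a k‖ ≤ 10 * (d : ℝ) ^ s * M := by
  have hmem {r : ℝ} (hr : 0 ≤ r) : (r : ℂ) ∈ sector (Real.pi * (1 - s / 2)) := by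
    rw [sector, Set.mem_ofPred_eq, Complex.arg_ofReal_of_nonneg hr, abs_zero]
    exact mul_nonneg Real.pi_pos.le (by linarith)
  have hM0 : 0 ≤ M := (norm_nonneg _).trans (hM _ (hmem le_rfl))
  obtain rfl | rfl | hd : d = 0 ∨ d = 1 ∨ 2 ≤ d := by lia
  · simp [Real.zero_rpow (by linarith : s ≠ 0)]
  · have hdiff : a 1 = (2 : ℂ) • (vecPoly a 1 (1 + (0 : ℝ))⁻¹ - vecPoly a 1 (1 + (1 : ℝ))⁻¹) := by
      simp only [vecPoly, Finset.sum_range_succ, Finset.sum_range_zero]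
      norm_num
      module
    have hle := norm_sub_le (vecPoly a 1 (1 + (0 : ℝ))⁻¹) (vecPoly a 1 (1 + (1 : ℝ))⁻¹)
    calc ‖∑ k ∈ Finset.range (1 + 1), (k : ℂ) • a k‖ = ‖a 1‖ := by simp [Finset.sum_range_succ]
      _ = 2 * ‖vecPoly a 1 (1 + (0 : ℝ))⁻¹ - vecPoly a 1 (1 + (1 : ℝ))⁻¹‖ := by
          conv_lhs => rw [hdiff, norm_smul, Complex.norm_ofNat]
      _ ≤ 2 * (M + M) := by linarith [hM _ (hmem le_rfl), hM _ (hmem zero_le_one)]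
      _ ≤ 10 * ((1 : ℕ) : ℝ) ^ s * M := by
          rw [Nat.cast_one, Real.one_rpow]
          linarith
  · have hd1 : (1 : ℝ) < d := by exact_mod_cast hd
    calc ‖∑ k ∈ Finset.range (d + 1), (k : ℂ) • a k‖
        ≤ ((1 + (d : ℝ)⁻¹) / (1 - (d : ℝ)⁻¹)) ^ d * M / (d : ℝ)⁻¹ ^ s :=
          norm_sum_natCast_smul_le_div hs1 hs2 hM (by positivity) (inv_lt_one_of_one_lt₀ hd1)
      _ ≤ 10 * M / (d : ℝ)⁻¹ ^ s := by
          gcongr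
          exact one_add_inv_div_one_sub_inv_pow_le hd
      _ = 10 * (d : ℝ) ^ s * M := by
          rw [Real.inv_rpow (by positivity), div_inv_eq_mul]
          ring

end LensMarkov

section Cube

variable {n : ℕ}

/-- The involution of the cube that flips the `i`-th coordinate. -/
def flipPerm (i : Fin n) : Equiv.Perm (Fin n → Bool) :=
  Function.Involutive.toPerm (fun ε => Function.update ε i (!(ε i))) fun ε => by simp

theorem flipPerm_involutive (i : Fin n) : Function.Involutive (flipPerm i) :=
  Function.Involutive.toPerm_involutive _

theorem sgn_not (b : Bool) : sgn (!b) = -sgn b := by cases b <;> simp [sgn]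

theorem walsh_flipPerm (i : Fin n) (A : Finset (Fin n)) (ε : Fin n → Bool) :
    walsh A (flipPerm i ε) = if i ∈ A then -walsh A ε else walsh A ε := by
  have hne {j : Fin n} (hj : j ≠ i) : sgn (flipPerm i ε j) = sgn (ε j) :=
    congrArg sgn (Function.update_of_ne hj _ ε)
  have hi : sgn (flipPerm i ε i) = -sgn (ε i) := by
    rw [← sgn_not]
    exact congrArg sgn (Function.update_self i _ ε)
  split_ifs with hA
  · rw [walsh, walsh, ← Finset.mul_prod_erase _ _ hA, ← Finset.mul_prod_erase _ _ hA, hi, neg_mul,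
      Finset.prod_congr rfl fun j hj => hne (Finset.ne_of_mem_erase hj)]
  · exact Finset.prod_congr rfl fun j hj => hne (ne_of_mem_of_not_mem hj hA)

theorem sum_walsh_mul_walsh (ε δ : Fin n → Bool) :
    ∑ A : Finset (Fin n), walsh A ε * walsh A δ = if ε = δ then 2 ^ n else 0 := by
  have hprod : ∑ A : Finset (Fin n), walsh A ε * walsh A δ =
      ∏ i : Fin n, (1 + sgn (ε i) * sgn (δ i)) := by
    simp only [Finset.prod_one_add, Finset.powerset_univ, walsh, Finset.prod_mul_distrib]
  have hfactor (a b : Bool) : 1 + sgn a * sgn b = if a = b then 2 else 0 := by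
    cases a <;> cases b <;> norm_num [sgn]
  simp only [hprod, hfactor]
  split_ifs with h
  · simp [h]
  · obtain ⟨i, hi⟩ := Function.ne_iff.1 h
    exact Finset.prod_eq_zero (Finset.mem_univ i) (if_neg hi)

theorem sum_walsh_smul_coeff (f : (Fin n → Bool) → X) (ε : Fin n → Bool) :
    ∑ A : Finset (Fin n), walsh A ε • coeff f A = f ε := by
  calc ∑ A : Finset (Fin n), walsh A ε • coeff f A
      = (2 ^ n : ℝ)⁻¹ • ∑ δ, (∑ A : Finset (Fin n), walsh A ε * walsh A δ) • f δ := by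
        simp only [coeff, Finset.smul_sum, Finset.sum_smul, smul_smul]
        rw [Finset.sum_comm]
        refine Finset.sum_congr rfl fun δ _ => Finset.sum_congr rfl fun A _ => ?_
        ring_nf
    _ = f ε := by simp [sum_walsh_mul_walsh, ite_smul, smul_smul]

/-- The noise operator of complex parameter `z` acting on the coordinates in `S`: it multiplies
the Walsh function `w_A` by `z ^ |A ∩ S|`. -/
def noiseOn (z : ℂ) (S : Finset (Fin n)) (f : (Fin n → Bool) → X) : (Fin n → Bool) → X :=
  fun ε => ∑ A : Finset (Fin n), z ^ (A ∩ S).card • walsh A ε • coeff f A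

theorem noiseOn_empty (z : ℂ) (f : (Fin n → Bool) → X) : noiseOn z ∅ f = f := by
  funext ε
  simp [noiseOn, sum_walsh_smul_coeff]

theorem noiseOn_insert (z : ℂ) {S : Finset (Fin n)} {i : Fin n} (hi : i ∉ S)
    (f : (Fin n → Bool) → X) :
    noiseOn z (insert i S) f = permNoise z (flipPerm i) (noiseOn z S f) := by
  funext ε
  simp only [noiseOn, permNoise, Pi.add_apply, Pi.smul_apply, Function.comp_apply]
  rw [Finset.smul_sum, Finset.smul_sum, ← Finset.sum_add_distrib]
  refine Finset.sum_congr rfl fun A _ => ?_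
  rw [walsh_flipPerm]
  by_cases hA : i ∈ A
  · rw [Finset.inter_insert_of_mem hA,
      Finset.card_insert_of_notMem fun h => hi (Finset.mem_inter.1 h).2, if_pos hA, neg_smul]
    module
  · rw [Finset.inter_insert_of_notMem hA, if_neg hA]
    module

theorem norm_toLp_noiseOn_le {H : Type*} [NormedAddCommGroup H] [InnerProductSpace ℂ H]
    {p : ℝ≥0∞} [Fact (1 ≤ p)] {c : ℂ} (hc : c ∈ sector (sectorAngle p)) (S : Finset (Fin n))
    (f : (Fin n → Bool) → H) :
    ‖WithLp.toLp p (noiseOn (1 + c)⁻¹ S f)‖ ≤ ‖WithLp.toLp p f‖ := by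
  induction S using Finset.induction_on with
  | empty => rw [noiseOn_empty]
  | insert i S hi ih =>
    rw [noiseOn_insert _ hi]
    exact (norm_toLp_permNoise_le (flipPerm_involutive i) hc _).trans ih

/-- The level-`k` part `∑_{|A| = k} f̂(A) w_A` of `f`. -/
def levelPart (f : (Fin n → Bool) → X) (k : ℕ) : (Fin n → Bool) → X :=
  fun ε => ∑ A : Finset (Fin n) with A.card = k, walsh A ε • coeff f A

theorem sum_smul_levelPart {f : (Fin n → Bool) → X} {d : ℕ} (hf : degLE f d) (c : ℕ → ℂ)
    (ε : Fin n → Bool) :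
    ∑ k ∈ Finset.range (d + 1), c k • levelPart f k ε =
      ∑ A : Finset (Fin n), c A.card • walsh A ε • coeff f A := by
  simp only [levelPart, Finset.smul_sum, Finset.sum_filter, smul_ite, smul_zero]
  rw [Finset.sum_comm]
  refine Finset.sum_congr rfl fun A _ => ?_
  rw [Finset.sum_ite_eq]
  split_ifs with hA
  · rfl
  · rw [hf A (by simpa using hA), smul_zero, smul_zero]

theorem toLp_noiseOn_univ_eq_vecPoly (p : ℝ≥0∞) {f : (Fin n → Bool) → X} {d : ℕ}
    (hf : degLE f d) (z : ℂ) :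
    WithLp.toLp p (noiseOn z Finset.univ f) =
      vecPoly (fun k => WithLp.toLp p (levelPart f k)) d z := by
  ext ε
  simp [vecPoly, noiseOn, sum_smul_levelPart hf]

theorem toLp_lap_eq_sum (p : ℝ≥0∞) {f : (Fin n → Bool) → X} {d : ℕ} (hf : degLE f d) :
    WithLp.toLp p (lap f) =
      ∑ k ∈ Finset.range (d + 1), (k : ℂ) • WithLp.toLp p (levelPart f k) := by
  ext ε
  simp [lap, sum_smul_levelPart hf, ← Complex.coe_smul]

theorem exists_lpNormE_eq_mul_norm_toLp (Y : Type*) [NormedAddCommGroup Y] (p : ℝ≥0∞)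
    [Fact (1 ≤ p)] :
    ∃ c : ℝ, 0 ≤ c ∧ ∀ f : (Fin n → Bool) → Y, lpNormE p f = c * ‖WithLp.toLp p f‖ := by
  rcases ENNReal.dichotomy p with rfl | hp
  · exact ⟨1, zero_le_one, fun f => by
      rw [lpNormE, if_pos rfl, one_mul, PiLp.norm_eq_ciSup, linfNorm]⟩
  · refine ⟨((2 ^ n : ℝ)⁻¹) ^ (1 / p.toReal), by positivity, fun f => ?_⟩
    have htop : p ≠ ⊤ := by
      rintro rfl
      norm_num at hp
    rw [lpNormE, if_neg htop, PiLp.norm_eq_sum (by linarith), lpNorm,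
      Real.mul_rpow (by positivity) (by positivity)]

end Cube

theorem stmt13_general {H : Type*} [NormedAddCommGroup H] [InnerProductSpace ℂ H] (p : ℝ≥0∞)
    (hp : 1 ≤ p) (θ : ℝ)
    (hθ : θ = if p = ⊤ then 0
      else 2 * Real.arcsin (2 * Real.sqrt (p.toReal - 1) / p.toReal))
    (n d : ℕ) (f : (Fin n → Bool) → H) (hf : degLE f d) :
    lpNormE p (lap f) ≤ 10 * (d : ℝ) ^ (2 - θ / Real.pi) * lpNormE p f := by
  have : Fact (1 ≤ p) := ⟨hp⟩
  have hθp : θ = 2 * sectorAngle p := by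
    rw [hθ, sectorAngle]
    split_ifs <;> simp
  have hs1 : 1 ≤ 2 - θ / Real.pi := by
    have : θ / Real.pi ≤ 1 :=
      (div_le_one Real.pi_pos).2 (by linarith [sectorAngle_le_pi_div_two p])
    linarith
  have hs2 : 2 - θ / Real.pi ≤ 2 :=
    sub_le_self _ (div_nonneg (by linarith [sectorAngle_nonneg p]) Real.pi_pos.le)
  have hangle : Real.pi * (1 - (2 - θ / Real.pi) / 2) = sectorAngle p := by
    rw [hθp]
    field_simp
    ring
  have hlap : ‖WithLp.toLp p (lap f)‖ ≤ 10 * (d : ℝ) ^ (2 - θ / Real.pi) * ‖WithLp.toLp p f‖ := by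
    rw [toLp_lap_eq_sum p hf]
    refine norm_sum_natCast_smul_le hs1 hs2 fun c hc => ?_
    rw [← toLp_noiseOn_univ_eq_vecPoly p hf]
    exact norm_toLp_noiseOn_le (hangle ▸ hc) Finset.univ f
  obtain ⟨c, hc, hnorm⟩ := exists_lpNormE_eq_mul_norm_toLp (n := n) H p
  rw [hnorm, hnorm, mul_left_comm]
  exact mul_le_mul_of_nonneg_left hlap hc

/-- **Scalar Bernstein–Markov inequality for the Laplacian**, with the explicit exponent
`2 - θ_p/π` where `θ_p = 2 arcsin(2√(p-1)/p)` (and `θ_1 = θ_∞ = 0`). -/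
theorem stmt13 (p : ℝ≥0∞) (hp : 1 ≤ p) (θ : ℝ)
    (hθ : θ = if p = ⊤ then 0
      else 2 * Real.arcsin (2 * Real.sqrt (p.toReal - 1) / p.toReal))
    (n d : ℕ) (hd : 1 ≤ d) (hdn : d ≤ n)
    (f : (Fin n → Bool) → ℂ) (hf : degLE f d) :
    lpNormE p (lap f) ≤ 10 * (d : ℝ) ^ (2 - θ / Real.pi) * lpNormE p f :=
  stmt13_general p hp θ hθ n d f hf

end HammingCube
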